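/- arXiv:math/0608678 — 2 statements merged into one kernel-verified Lean document; each statement's English description precedes it below -/
import Mathlib

section
/- For any elements x, y, z of the tensor algebra TV of a Yetter–Drinfeld module, with [x,y] = xy − m∘c⁻¹(x⊗y) and c⁻¹(x⊗y) = Σ ˣy ⊗ xʸ, the following braided Jacobi-type identity holds: [[x,y],z] − [x,[y,z]] = Σ [x, ʸz] yᶻ − Σ ˣy [xʸ, z]. -/
open TensorProduct

noncomputable section

variable {k H : Type*} [Field k] [Ring H] [HopfAlgebra k H]

/-- The inverse braiding `c⁻¹(x ⊗ y) = y₍₀₎ ⊗ S⁻¹(y₍₋₁₎).x` on `T ⊗ T`, built from the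
action `act`, the coaction `coact` and the inverse `Sinv` of the antipode. -/
def cinvMap (Sinv : H →ₗ[k] H) (T : Type*) [Ring T] [Algebra k T]
    (act : H ⊗[k] T →ₗ[k] T) (coact : T →ₗ[k] H ⊗[k] T) :
    T ⊗[k] T →ₗ[k] T ⊗[k] T :=
  (LinearMap.lTensor T act)
    ∘ₗ (LinearMap.lTensor T (LinearMap.rTensor T Sinv))
    ∘ₗ (LinearMap.lTensor T (TensorProduct.comm k T H).toLinearMap)
    ∘ₗ (TensorProduct.comm k (T ⊗[k] H) T).toLinearMap
    ∘ₗ (TensorProduct.assoc k T H T).symm.toLinearMap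
    ∘ₗ (LinearMap.lTensor T coact)

/-- The skew bracket `[x,y] = xy − m∘c⁻¹(x⊗y)` as a linear map `T ⊗ T → T`. -/
def brMap (Sinv : H →ₗ[k] H) (T : Type*) [Ring T] [Algebra k T]
    (act : H ⊗[k] T →ₗ[k] T) (coact : T →ₗ[k] H ⊗[k] T) :
    T ⊗[k] T →ₗ[k] T :=
  LinearMap.mul' k T - LinearMap.mul' k T ∘ₗ cinvMap Sinv T act coact

/-- Left-hand side `h₁x ↦ (h₁.x)₍₋₁₎h₂ ⊗ (h₁.x)₍₀₎` of the Yetter–Drinfeld condition. -/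
def ydL (T : Type*) [Ring T] [Algebra k T]
    (act : H ⊗[k] T →ₗ[k] T) (coact : T →ₗ[k] H ⊗[k] T) :
    H ⊗[k] T →ₗ[k] H ⊗[k] T :=
  (LinearMap.rTensor T (LinearMap.mul' k H))
    ∘ₗ (TensorProduct.assoc k H H T).symm.toLinearMap
    ∘ₗ (LinearMap.lTensor H (TensorProduct.comm k T H).toLinearMap)
    ∘ₗ (TensorProduct.assoc k H T H).toLinearMap
    ∘ₗ (LinearMap.rTensor H (coact ∘ₗ act))
    ∘ₗ (TensorProduct.assoc k H T H).symm.toLinearMap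
    ∘ₗ (LinearMap.lTensor H (TensorProduct.comm k H T).toLinearMap)
    ∘ₗ (TensorProduct.assoc k H H T).toLinearMap
    ∘ₗ (LinearMap.rTensor T (Coalgebra.comul (R := k) (A := H)))

/-- Right-hand side `h⊗x ↦ h₁x₍₋₁₎ ⊗ h₂.x₍₀₎` of the Yetter–Drinfeld condition. -/
def ydR (T : Type*) [Ring T] [Algebra k T]
    (act : H ⊗[k] T →ₗ[k] T) (coact : T →ₗ[k] H ⊗[k] T) :
    H ⊗[k] T →ₗ[k] H ⊗[k] T :=
  (TensorProduct.map (LinearMap.mul' k H) act)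
    ∘ₗ (TensorProduct.tensorTensorTensorComm k H H H T).toLinearMap
    ∘ₗ (LinearMap.lTensor (H ⊗[k] H) coact)
    ∘ₗ (LinearMap.rTensor T (Coalgebra.comul (R := k) (A := H)))

namespace YetterDrinfeld

open Coalgebra HopfAlgebra

section Antipode

theorem antipode_inv_mul_antidistrib {Sinv : H →ₗ[k] H}
    (hS1 : ∀ h, Sinv (antipode k h) = h) (hS2 : ∀ h, antipode k (Sinv h) = h) (g h : H) :
    Sinv (g * h) = Sinv h * Sinv g := by
  rw [← hS1 (Sinv h * Sinv g), antipode_mul_antidistrib, hS2, hS2]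

theorem antipode_inv_one {Sinv : H →ₗ[k] H} (hS1 : ∀ h, Sinv (antipode k h) = h) :
    Sinv (1 : H) = 1 := by
  simpa using hS1 1

/-- `S⁻¹(h₂) h₁ = ε(h)`. -/
theorem mul_antipode_inv_left {Sinv : H →ₗ[k] H}
    (hS1 : ∀ h, Sinv (antipode k h) = h) (hS2 : ∀ h, antipode k (Sinv h) = h) (h : H) :
    LinearMap.mul' k H (TensorProduct.comm k H H (Sinv.lTensor H (comul (R := k) h))) =
      algebraMap k H (counit h) := by
  have key : ∀ w : H ⊗[k] H, LinearMap.mul' k H (TensorProduct.comm k H H (Sinv.lTensor H w)) =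
      Sinv (LinearMap.mul' k H ((antipode k).rTensor H w)) := by
    intro w
    induction w with
    | zero => simp
    | add a b ha hb => simp only [map_add, ha, hb]
    | tmul a b => simp [antipode_inv_mul_antidistrib hS1 hS2, hS1]
  rw [key, mul_antipode_rTensor_comul_apply, Algebra.algebraMap_eq_smul_one, map_smul,
    antipode_inv_one hS1]

/-- `h₂ S⁻¹(h₁) = ε(h)`. -/
theorem mul_antipode_inv_right {Sinv : H →ₗ[k] H}
    (hS1 : ∀ h, Sinv (antipode k h) = h) (hS2 : ∀ h, antipode k (Sinv h) = h) (h : H) :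
    LinearMap.mul' k H (TensorProduct.comm k H H (Sinv.rTensor H (comul (R := k) h))) =
      algebraMap k H (counit h) := by
  have key : ∀ w : H ⊗[k] H, LinearMap.mul' k H (TensorProduct.comm k H H (Sinv.rTensor H w)) =
      Sinv (LinearMap.mul' k H ((antipode k).lTensor H w)) := by
    intro w
    induction w with
    | zero => simp
    | add a b ha hb => simp only [map_add, ha, hb]
    | tmul a b => simp [antipode_inv_mul_antidistrib hS1 hS2, hS1]
  rw [key, mul_antipode_lTensor_comul_apply, Algebra.algebraMap_eq_smul_one, map_smul,
    antipode_inv_one hS1]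

end Antipode

section Braiding

variable {T : Type*} [Ring T] [Algebra k T]

/-- The braiding `c(x ⊗ y) = x₍₋₁₎.y ⊗ x₍₀₎`. -/
def braidMap (act : H ⊗[k] T →ₗ[k] T) (coact : T →ₗ[k] H ⊗[k] T) :
    T ⊗[k] T →ₗ[k] T ⊗[k] T :=
  act.rTensor T ∘ₗ (TensorProduct.assoc k H T T).symm.toLinearMap
    ∘ₗ (TensorProduct.comm k T T).toLinearMap.lTensor H
    ∘ₗ (TensorProduct.assoc k H T T).toLinearMap ∘ₗ coact.rTensor T

/-- The map `h ⊗ t ↦ h.y ⊗ t`. -/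
def actTensor (act : H ⊗[k] T →ₗ[k] T) (y : T) : H ⊗[k] T →ₗ[k] T ⊗[k] T :=
  (act ∘ₗ (TensorProduct.mk k H T).flip y).rTensor T

/-- The map `h ⊗ t ↦ t ⊗ S⁻¹(h).x`. -/
def tensorInvAct (Sinv : H →ₗ[k] H) (act : H ⊗[k] T →ₗ[k] T) (x : T) :
    H ⊗[k] T →ₗ[k] T ⊗[k] T :=
  (act ∘ₗ (TensorProduct.mk k H T).flip x ∘ₗ Sinv).lTensor T
    ∘ₗ (TensorProduct.comm k H T).toLinearMap

/-- The map sending `a ⊗ b` to the operator `y ⊗ z ↦ a.y ⊗ b.z`. -/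
def tensorAct (act : H ⊗[k] T →ₗ[k] T) : H ⊗[k] H →ₗ[k] T ⊗[k] T →ₗ[k] T ⊗[k] T :=
  TensorProduct.homTensorHomMap (.id k) T T T T ∘ₗ
    TensorProduct.map (TensorProduct.curry act) (TensorProduct.curry act)

@[simp]
theorem actTensor_tmul (act : H ⊗[k] T →ₗ[k] T) (y : T) (h : H) (t : T) :
    actTensor act y (h ⊗ₜ t) = act (h ⊗ₜ y) ⊗ₜ t := by
  simp [actTensor]

@[simp]
theorem tensorInvAct_tmul (Sinv : H →ₗ[k] H) (act : H ⊗[k] T →ₗ[k] T) (x : T) (h : H) (t : T) :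
    tensorInvAct Sinv act x (h ⊗ₜ t) = t ⊗ₜ act (Sinv h ⊗ₜ x) := by
  simp [tensorInvAct]

@[simp]
theorem tensorAct_tmul (act : H ⊗[k] T →ₗ[k] T) (a b : H) (y z : T) :
    tensorAct act (a ⊗ₜ b) (y ⊗ₜ z) = act (a ⊗ₜ y) ⊗ₜ act (b ⊗ₜ z) := by
  simp [tensorAct]

theorem braidMap_tmul (act : H ⊗[k] T →ₗ[k] T) (coact : T →ₗ[k] H ⊗[k] T) (x y : T) :
    braidMap act coact (x ⊗ₜ y) = actTensor act y (coact x) := by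
  simp only [braidMap, LinearMap.comp_apply, LinearMap.rTensor_tmul]
  induction coact x with
  | zero => simp
  | add a b ha hb => simp only [map_add, TensorProduct.add_tmul, ha, hb]
  | tmul h t => simp

theorem cinvMap_tmul (Sinv : H →ₗ[k] H) (act : H ⊗[k] T →ₗ[k] T) (coact : T →ₗ[k] H ⊗[k] T)
    (x y : T) :
    cinvMap Sinv T act coact (x ⊗ₜ y) = tensorInvAct Sinv act x (coact y) := by
  simp only [cinvMap, LinearMap.comp_apply, LinearMap.lTensor_tmul]
  induction coact y with
  | zero => simp
  | add a b ha hb => simp only [map_add, TensorProduct.tmul_add, ha, hb]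
  | tmul h t => simp

theorem cinvMap_comp_braidMap {Sinv : H →ₗ[k] H}
    (hS1 : ∀ h, Sinv (antipode k h) = h) (hS2 : ∀ h, antipode k (Sinv h) = h)
    {act : H ⊗[k] T →ₗ[k] T} (hact1 : ∀ x, act ((1 : H) ⊗ₜ x) = x)
    (hactm : ∀ (g h : H) (x : T), act ((g * h) ⊗ₜ x) = act (g ⊗ₜ act (h ⊗ₜ x)))
    {coact : T →ₗ[k] H ⊗[k] T}
    (hcounit : ∀ x, TensorProduct.lid k T ((counit (R := k) (A := H)).rTensor T (coact x)) = x)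
    (hcoassoc : ∀ x, TensorProduct.assoc k H H T ((comul (R := k) (A := H)).rTensor T (coact x)) =
      coact.lTensor H (coact x)) :
    cinvMap Sinv T act coact ∘ₗ braidMap act coact = LinearMap.id := by
  ext x y
  simp only [TensorProduct.AlgebraTensorModule.curry_apply, TensorProduct.curry_apply,
    LinearMap.restrictScalars_self, LinearMap.comp_apply, LinearMap.id_apply, braidMap_tmul]
  -- `a ⊗ (b ⊗ t) ↦ t ⊗ (S⁻¹(b) a).y`
  let Φ : H ⊗[k] (H ⊗[k] T) →ₗ[k] T ⊗[k] T :=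
    (act ∘ₗ (TensorProduct.mk k H T).flip y ∘ₗ LinearMap.mul' k H
        ∘ₗ (TensorProduct.comm k H H).toLinearMap ∘ₗ Sinv.lTensor H).lTensor T
      ∘ₗ (TensorProduct.comm k (H ⊗[k] H) T).toLinearMap
      ∘ₗ (TensorProduct.assoc k H H T).symm.toLinearMap
  have h1 : ∀ u : H ⊗[k] T,
      Φ (coact.lTensor H u) = cinvMap Sinv T act coact (actTensor act y u) := by
    intro u
    induction u with
    | zero => simp
    | add a b ha hb => simp only [map_add, ha, hb]
    | tmul h t =>
      simp only [actTensor_tmul, cinvMap_tmul, LinearMap.lTensor_tmul]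
      induction coact t with
      | zero => simp
      | add a b ha hb => simp only [map_add, TensorProduct.tmul_add, ha, hb]
      | tmul g s => simp [Φ, hactm]
  have h2 : ∀ u : H ⊗[k] T,
      Φ (TensorProduct.assoc k H H T ((comul (R := k) (A := H)).rTensor T u)) =
        TensorProduct.lid k T ((counit (R := k) (A := H)).rTensor T u) ⊗ₜ y := by
    intro u
    induction u with
    | zero => simp
    | add a b ha hb => simp only [map_add, TensorProduct.add_tmul, ha, hb]
    | tmul h t =>
      have := mul_antipode_inv_left hS1 hS2 h
      simp only [Φ, LinearMap.rTensor_tmul, LinearMap.comp_apply, LinearEquiv.coe_coe,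
        LinearEquiv.symm_apply_apply, TensorProduct.comm_tmul, LinearMap.lTensor_tmul] at this ⊢
      rw [this]
      simp [Algebra.algebraMap_eq_smul_one, hact1, ← TensorProduct.smul_tmul']
  rw [← h1, ← hcoassoc, h2, hcounit]

theorem braidMap_comp_cinvMap {Sinv : H →ₗ[k] H}
    (hS1 : ∀ h, Sinv (antipode k h) = h) (hS2 : ∀ h, antipode k (Sinv h) = h)
    {act : H ⊗[k] T →ₗ[k] T} (hact1 : ∀ x, act ((1 : H) ⊗ₜ x) = x)
    (hactm : ∀ (g h : H) (x : T), act ((g * h) ⊗ₜ x) = act (g ⊗ₜ act (h ⊗ₜ x)))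
    {coact : T →ₗ[k] H ⊗[k] T}
    (hcounit : ∀ x, TensorProduct.lid k T ((counit (R := k) (A := H)).rTensor T (coact x)) = x)
    (hcoassoc : ∀ x, TensorProduct.assoc k H H T ((comul (R := k) (A := H)).rTensor T (coact x)) =
      coact.lTensor H (coact x)) :
    braidMap act coact ∘ₗ cinvMap Sinv T act coact = LinearMap.id := by
  ext x y
  simp only [TensorProduct.AlgebraTensorModule.curry_apply, TensorProduct.curry_apply,
    LinearMap.restrictScalars_self, LinearMap.comp_apply, LinearMap.id_apply, cinvMap_tmul]
  -- `a ⊗ (b ⊗ t) ↦ (b S⁻¹(a)).x ⊗ t`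
  let Φ : H ⊗[k] (H ⊗[k] T) →ₗ[k] T ⊗[k] T :=
    (act ∘ₗ (TensorProduct.mk k H T).flip x ∘ₗ LinearMap.mul' k H
        ∘ₗ (TensorProduct.comm k H H).toLinearMap ∘ₗ Sinv.rTensor H).rTensor T
      ∘ₗ (TensorProduct.assoc k H H T).symm.toLinearMap
  have h1 : ∀ u : H ⊗[k] T,
      Φ (coact.lTensor H u) = braidMap act coact (tensorInvAct Sinv act x u) := by
    intro u
    induction u with
    | zero => simp
    | add a b ha hb => simp only [map_add, ha, hb]
    | tmul h t =>
      simp only [tensorInvAct_tmul, braidMap_tmul, LinearMap.lTensor_tmul]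
      induction coact t with
      | zero => simp
      | add a b ha hb => simp only [map_add, TensorProduct.tmul_add, ha, hb]
      | tmul g s => simp [Φ, hactm]
  have h2 : ∀ u : H ⊗[k] T,
      Φ (TensorProduct.assoc k H H T ((comul (R := k) (A := H)).rTensor T u)) =
        x ⊗ₜ TensorProduct.lid k T ((counit (R := k) (A := H)).rTensor T u) := by
    intro u
    induction u with
    | zero => simp
    | add a b ha hb => simp only [map_add, TensorProduct.tmul_add, ha, hb]
    | tmul h t =>
      have := mul_antipode_inv_right hS1 hS2 h
      simp only [Φ, LinearMap.rTensor_tmul, LinearMap.comp_apply, LinearEquiv.coe_coe,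
        LinearEquiv.symm_apply_apply] at this ⊢
      rw [this]
      simp [Algebra.algebraMap_eq_smul_one, hact1, ← TensorProduct.smul_tmul']
  rw [← h1, ← hcoassoc, h2, hcounit]

/-- The operator `f ⊗ id` on `T ⊗ (T ⊗ T)`. -/
def onLeft (f : T ⊗[k] T →ₗ[k] T ⊗[k] T) : Module.End k (T ⊗[k] (T ⊗[k] T)) :=
  (TensorProduct.assoc k T T T).toLinearMap ∘ₗ f.rTensor T
    ∘ₗ (TensorProduct.assoc k T T T).symm.toLinearMap

/-- The operator `id ⊗ f` on `T ⊗ (T ⊗ T)`. -/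
def onRight (f : T ⊗[k] T →ₗ[k] T ⊗[k] T) : Module.End k (T ⊗[k] (T ⊗[k] T)) :=
  f.lTensor T

theorem onLeft_tmul (f : T ⊗[k] T →ₗ[k] T ⊗[k] T) (x y z : T) :
    onLeft f (x ⊗ₜ (y ⊗ₜ z)) = TensorProduct.assoc k T T T (f (x ⊗ₜ y) ⊗ₜ z) := by
  simp [onLeft]

theorem onRight_tmul (f : T ⊗[k] T →ₗ[k] T ⊗[k] T) (x : T) (u : T ⊗[k] T) :
    onRight f (x ⊗ₜ u) = x ⊗ₜ f u := by
  simp [onRight]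

theorem onLeft_mul_onLeft {f g : T ⊗[k] T →ₗ[k] T ⊗[k] T} (h : f ∘ₗ g = LinearMap.id) :
    onLeft f * onLeft g = 1 := by
  refine LinearMap.ext fun u ↦ ?_
  have := fun v ↦ LinearMap.congr_fun (congrArg (LinearMap.rTensor T) h) v
  simp only [LinearMap.rTensor_comp, LinearMap.comp_apply, LinearMap.rTensor_id,
    LinearMap.id_apply] at this
  simp [onLeft, this]

theorem onRight_mul_onRight {f g : T ⊗[k] T →ₗ[k] T ⊗[k] T} (h : f ∘ₗ g = LinearMap.id) :
    onRight f * onRight g = 1 := by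
  rw [onRight, onRight, Module.End.mul_eq_comp, ← LinearMap.lTensor_comp, h, LinearMap.lTensor_id,
    Module.End.one_eq_id]

theorem braidMap_comp_lTensor_mul {act : H ⊗[k] T →ₗ[k] T}
    (hma : act ∘ₗ (LinearMap.mul' k T).lTensor H =
      LinearMap.mul' k T ∘ₗ TensorProduct.map act act
        ∘ₗ (TensorProduct.tensorTensorTensorComm k H H T T).toLinearMap
        ∘ₗ (comul (R := k) (A := H)).rTensor (T ⊗[k] T))
    {coact : T →ₗ[k] H ⊗[k] T}
    (hcoassoc : ∀ x, TensorProduct.assoc k H H T ((comul (R := k) (A := H)).rTensor T (coact x)) =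
      coact.lTensor H (coact x)) :
    braidMap act coact ∘ₗ (LinearMap.mul' k T).lTensor T =
      (LinearMap.mul' k T).rTensor T ∘ₗ (TensorProduct.assoc k T T T).symm.toLinearMap
        ∘ₗ (onRight (braidMap act coact) * onLeft (braidMap act coact)) := by
  refine TensorProduct.ext_threefold' fun x y z ↦ ?_
  simp only [LinearMap.comp_apply, LinearMap.lTensor_tmul, LinearMap.mul'_apply, braidMap_tmul,
    Module.End.mul_apply, onLeft_tmul, LinearEquiv.coe_coe]
  -- `a ⊗ (b ⊗ t) ↦ (a.y)(b.z) ⊗ t`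
  let Φ : H ⊗[k] (H ⊗[k] T) →ₗ[k] T ⊗[k] T :=
    (LinearMap.mul' k T ∘ₗ (tensorAct act).flip (y ⊗ₜ z)).rTensor T
      ∘ₗ (TensorProduct.assoc k H H T).symm.toLinearMap
  have h1 : ∀ u : H ⊗[k] T, Φ (coact.lTensor H u) =
      (LinearMap.mul' k T).rTensor T ((TensorProduct.assoc k T T T).symm
        (onRight (braidMap act coact) (TensorProduct.assoc k T T T (actTensor act y u ⊗ₜ z)))) := by
    intro u
    induction u with
    | zero => simp
    | add a b ha hb => simp only [map_add, TensorProduct.add_tmul, ha, hb]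
    | tmul h t =>
      simp only [actTensor_tmul, braidMap_tmul, LinearMap.lTensor_tmul, TensorProduct.assoc_tmul,
        onRight_tmul]
      induction coact t with
      | zero => simp
      | add a b ha hb => simp only [map_add, TensorProduct.tmul_add, ha, hb]
      | tmul g s => simp [Φ]
  have hmul : ∀ h : H, act (h ⊗ₜ (y * z)) =
      LinearMap.mul' k T (tensorAct act (comul (R := k) h) (y ⊗ₜ z)) := by
    intro h
    have := LinearMap.congr_fun hma (h ⊗ₜ (y ⊗ₜ z))
    simp only [LinearMap.comp_apply, LinearMap.lTensor_tmul, LinearMap.mul'_apply,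
      LinearMap.rTensor_tmul, LinearEquiv.coe_coe] at this
    rw [this]
    induction comul (R := k) h with
    | zero => simp
    | add a b ha hb => simp only [map_add, TensorProduct.add_tmul, LinearMap.add_apply, ha, hb]
    | tmul a b => simp
  have h2 : ∀ u : H ⊗[k] T,
      Φ (TensorProduct.assoc k H H T ((comul (R := k) (A := H)).rTensor T u)) =
        actTensor act (y * z) u := by
    intro u
    induction u with
    | zero => simp
    | add a b ha hb => simp only [map_add, ha, hb]
    | tmul h t => simp [Φ, hmul]
  rw [← h1, ← hcoassoc, h2]

theorem braidMap_comp_rTensor_mul {act : H ⊗[k] T →ₗ[k] T}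
    (hactm : ∀ (g h : H) (x : T), act ((g * h) ⊗ₜ x) = act (g ⊗ₜ act (h ⊗ₜ x)))
    {coact : T →ₗ[k] H ⊗[k] T} (hcoact : ∀ x y, coact (x * y) = coact x * coact y) :
    braidMap act coact ∘ₗ (LinearMap.mul' k T).rTensor T
        ∘ₗ (TensorProduct.assoc k T T T).symm.toLinearMap =
      (LinearMap.mul' k T).lTensor T
        ∘ₗ (onLeft (braidMap act coact) * onRight (braidMap act coact)) := by
  refine TensorProduct.ext_threefold' fun x y z ↦ ?_
  simp only [LinearMap.comp_apply, LinearMap.rTensor_tmul, LinearMap.mul'_apply, braidMap_tmul,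
    Module.End.mul_apply, onRight_tmul, LinearEquiv.coe_coe, TensorProduct.assoc_symm_tmul, hcoact]
  induction coact y with
  | zero => simp
  | add a b ha hb => simp only [map_add, TensorProduct.tmul_add, mul_add, ha, hb]
  | tmul h t =>
    simp only [actTensor_tmul, onLeft_tmul, braidMap_tmul]
    induction coact x with
    | zero => simp
    | add a b ha hb => simp only [map_add, TensorProduct.add_tmul, add_mul, ha, hb]
    | tmul g s => simp [hactm]

/-- The braiding is `H`-linear. -/
theorem braidMap_tensorAct {act : H ⊗[k] T →ₗ[k] T}
    (hactm : ∀ (g h : H) (x : T), act ((g * h) ⊗ₜ x) = act (g ⊗ₜ act (h ⊗ₜ x)))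
    {coact : T →ₗ[k] H ⊗[k] T} (hYD : ydL T act coact = ydR T act coact) (h : H) (y z : T) :
    braidMap act coact (tensorAct act (comul (R := k) h) (y ⊗ₜ z)) =
      tensorAct act (comul (R := k) h) (braidMap act coact (y ⊗ₜ z)) := by
  have hyd := congrArg (actTensor act z) (LinearMap.congr_fun hYD (h ⊗ₜ y))
  simp only [ydL, ydR, LinearMap.comp_apply, LinearMap.rTensor_tmul, LinearEquiv.coe_coe,
    LinearMap.lTensor_tmul] at hyd
  rw [braidMap_tmul]
  convert hyd using 1
  · induction comul (R := k) h with
    | zero => simp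
    | add a b ha hb => simp only [map_add, TensorProduct.add_tmul, LinearMap.add_apply, ha, hb]
    | tmul a b =>
      simp only [tensorAct_tmul, braidMap_tmul, TensorProduct.assoc_tmul, LinearMap.lTensor_tmul,
        LinearEquiv.coe_coe, TensorProduct.comm_tmul, TensorProduct.assoc_symm_tmul,
        LinearMap.rTensor_tmul, LinearMap.comp_apply]
      induction coact (act (a ⊗ₜ y)) with
      | zero => simp
      | add a b ha hb => simp only [map_add, TensorProduct.add_tmul, ha, hb]
      | tmul g t => simp [hactm]
  · induction comul (R := k) h with
    | zero => simp
    | add a b ha hb => simp only [map_add, TensorProduct.add_tmul, LinearMap.add_apply, ha, hb]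
    | tmul a b =>
      induction coact y with
      | zero => simp
      | add a b ha hb => simp only [map_add, TensorProduct.tmul_add, ha, hb]
      | tmul g t => simp [hactm]

theorem braidMap_yangBaxter {act : H ⊗[k] T →ₗ[k] T}
    (hactm : ∀ (g h : H) (x : T), act ((g * h) ⊗ₜ x) = act (g ⊗ₜ act (h ⊗ₜ x)))
    {coact : T →ₗ[k] H ⊗[k] T}
    (hcoassoc : ∀ x, TensorProduct.assoc k H H T ((comul (R := k) (A := H)).rTensor T (coact x)) =
      coact.lTensor H (coact x))
    (hYD : ydL T act coact = ydR T act coact) :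
    onLeft (braidMap act coact) * onRight (braidMap act coact) * onLeft (braidMap act coact) =
      onRight (braidMap act coact) * onLeft (braidMap act coact) *
        onRight (braidMap act coact) := by
  refine TensorProduct.ext_threefold' fun x y z ↦ ?_
  simp only [Module.End.mul_apply, onLeft_tmul, onRight_tmul, braidMap_tmul]
  -- `a ⊗ (b ⊗ t) ↦ a.u₁ ⊗ (b.u₂ ⊗ t)`
  let Φ (u : T ⊗[k] T) : H ⊗[k] (H ⊗[k] T) →ₗ[k] T ⊗[k] (T ⊗[k] T) :=
    (TensorProduct.assoc k T T T).toLinearMap ∘ₗ ((tensorAct act).flip u).rTensor T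
      ∘ₗ (TensorProduct.assoc k H H T).symm.toLinearMap
  have h1 : ∀ u : H ⊗[k] T, onRight (braidMap act coact)
      (TensorProduct.assoc k T T T (actTensor act y u ⊗ₜ z)) =
        Φ (y ⊗ₜ z) (coact.lTensor H u) := by
    intro u
    induction u with
    | zero => simp
    | add a b ha hb => simp only [map_add, TensorProduct.add_tmul, ha, hb]
    | tmul h t =>
      simp only [actTensor_tmul, braidMap_tmul, LinearMap.lTensor_tmul, TensorProduct.assoc_tmul,
        onRight_tmul]
      induction coact t with
      | zero => simp
      | add a b ha hb => simp only [map_add, TensorProduct.tmul_add, ha, hb]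
      | tmul g s => simp [Φ]
  have h2 : ∀ u : H ⊗[k] T, onLeft (braidMap act coact) (Φ (y ⊗ₜ z)
      (TensorProduct.assoc k H H T ((comul (R := k) (A := H)).rTensor T u))) =
        Φ (actTensor act z (coact y))
          (TensorProduct.assoc k H H T ((comul (R := k) (A := H)).rTensor T u)) := by
    intro u
    induction u with
    | zero => simp
    | add a b ha hb => simp only [map_add, ha, hb]
    | tmul h t =>
      simp [Φ, onLeft, braidMap_tensorAct hactm hYD, braidMap_tmul]
  rw [h1, ← hcoassoc, h2, hcoassoc]
  induction coact y with
  | zero => simp [Φ]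
  | add a b ha hb =>
    simp only [Φ, map_add, TensorProduct.tmul_add, LinearMap.comp_apply,
      LinearMap.rTensor_add, LinearMap.add_apply] at ha hb ⊢
    rw [ha, hb]
  | tmul g s =>
    simp only [actTensor_tmul, onLeft_tmul, braidMap_tmul]
    induction coact x with
    | zero => simp
    | add a b ha hb => simp only [map_add, TensorProduct.add_tmul, ha, hb]
    | tmul h t =>
      simp only [actTensor_tmul, braidMap_tmul, LinearMap.lTensor_tmul, TensorProduct.assoc_tmul,
        onRight_tmul]
      induction coact t with
      | zero => simp
      | add a b ha hb => simp only [map_add, TensorProduct.tmul_add, ha, hb]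
      | tmul g s => simp [Φ]

/-- The Jacobi identity for the bracket `m - m ∘ d` of a solution `d` of the Yang–Baxter equation
that is compatible with the multiplication `m`. -/
theorem jacobi_of_yangBaxter {d : T ⊗[k] T →ₗ[k] T ⊗[k] T}
    (hl : d ∘ₗ (LinearMap.mul' k T).rTensor T ∘ₗ (TensorProduct.assoc k T T T).symm.toLinearMap =
      (LinearMap.mul' k T).lTensor T ∘ₗ (onLeft d * onRight d))
    (hr : d ∘ₗ (LinearMap.mul' k T).lTensor T =
      (LinearMap.mul' k T).rTensor T ∘ₗ (TensorProduct.assoc k T T T).symm.toLinearMap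
        ∘ₗ (onRight d * onLeft d))
    (hyb : onLeft d * onRight d * onLeft d = onRight d * onLeft d * onRight d)
    {br : T ⊗[k] T →ₗ[k] T} (hbr : br = LinearMap.mul' k T - LinearMap.mul' k T ∘ₗ d)
    (x y z : T) :
    br (br (x ⊗ₜ y) ⊗ₜ z) - br (x ⊗ₜ br (y ⊗ₜ z)) =
      LinearMap.mul' k T (br.rTensor T ((TensorProduct.assoc k T T T).symm (x ⊗ₜ d (y ⊗ₜ z)))) -
      LinearMap.mul' k T (br.lTensor T (TensorProduct.assoc k T T T (d (x ⊗ₜ y) ⊗ₜ z))) := by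
  let M : T ⊗[k] (T ⊗[k] T) →ₗ[k] T := LinearMap.mul' k T ∘ₗ (LinearMap.mul' k T).lTensor T
  have hM : ∀ u, LinearMap.mul' k T ((LinearMap.mul' k T).rTensor T
      ((TensorProduct.assoc k T T T).symm u)) = M u := by
    intro u
    refine LinearMap.congr_fun (f := LinearMap.mul' k T ∘ₗ (LinearMap.mul' k T).rTensor T ∘ₗ
      (TensorProduct.assoc k T T T).symm.toLinearMap) (g := M) ?_ u
    exact TensorProduct.ext_threefold' fun x y z ↦ by simp [M, mul_assoc]
  have hMr : ∀ u, LinearMap.mul' k T ((LinearMap.mul' k T).lTensor T u) = M u := fun _ ↦ rfl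
  have hL : ∀ u, d ((LinearMap.mul' k T).rTensor T ((TensorProduct.assoc k T T T).symm u)) =
      (LinearMap.mul' k T).lTensor T (onLeft d (onRight d u)) := fun u ↦ LinearMap.congr_fun hl u
  have hR : ∀ u, d ((LinearMap.mul' k T).lTensor T u) = (LinearMap.mul' k T).rTensor T
      ((TensorProduct.assoc k T T T).symm (onRight d (onLeft d u))) :=
    fun u ↦ LinearMap.congr_fun hr u
  have hY : ∀ u, onLeft d (onRight d (onLeft d u)) = onRight d (onLeft d (onRight d u)) :=
    fun u ↦ LinearMap.congr_fun hyb u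
  have hdl : ∀ u, d.rTensor T ((TensorProduct.assoc k T T T).symm u) =
      (TensorProduct.assoc k T T T).symm (onLeft d u) := fun u ↦ by simp [onLeft]
  have hdr : ∀ u, d.lTensor T u = onRight d u := fun _ ↦ rfl
  have e1 : br (x ⊗ₜ y) ⊗ₜ z = br.rTensor T ((TensorProduct.assoc k T T T).symm
      (x ⊗ₜ (y ⊗ₜ z))) := by simp
  have e2 : x ⊗ₜ[k] br (y ⊗ₜ z) = br.lTensor T (x ⊗ₜ (y ⊗ₜ z)) := by simp
  rw [e1, e2, ← onLeft_tmul, ← onRight_tmul]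
  generalize x ⊗ₜ[k] (y ⊗ₜ[k] z) = ξ
  subst hbr
  simp only [LinearMap.rTensor_sub, LinearMap.lTensor_sub, LinearMap.rTensor_comp,
    LinearMap.lTensor_comp, LinearMap.sub_apply, LinearMap.comp_apply, map_sub, hdl, hdr, hL, hR,
    hM, hMr, hY]
  abel

/-- The Jacobi identity for the bracket `m - m ∘ b⁻¹` of an invertible solution `b` of the
Yang–Baxter equation that is compatible with the multiplication `m`. -/
theorem jacobi_of_inverse_braiding {b d : T ⊗[k] T →ₗ[k] T ⊗[k] T}
    (hdb : d ∘ₗ b = LinearMap.id) (hbd : b ∘ₗ d = LinearMap.id)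
    (hl : b ∘ₗ (LinearMap.mul' k T).lTensor T =
      (LinearMap.mul' k T).rTensor T ∘ₗ (TensorProduct.assoc k T T T).symm.toLinearMap
        ∘ₗ (onRight b * onLeft b))
    (hr : b ∘ₗ (LinearMap.mul' k T).rTensor T ∘ₗ (TensorProduct.assoc k T T T).symm.toLinearMap =
      (LinearMap.mul' k T).lTensor T ∘ₗ (onLeft b * onRight b))
    (hyb : onLeft b * onRight b * onLeft b = onRight b * onLeft b * onRight b)
    {br : T ⊗[k] T →ₗ[k] T} (hbr : br = LinearMap.mul' k T - LinearMap.mul' k T ∘ₗ d)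
    (x y z : T) :
    br (br (x ⊗ₜ y) ⊗ₜ z) - br (x ⊗ₜ br (y ⊗ₜ z)) =
      LinearMap.mul' k T (br.rTensor T ((TensorProduct.assoc k T T T).symm (x ⊗ₜ d (y ⊗ₜ z)))) -
      LinearMap.mul' k T (br.lTensor T (TensorProduct.assoc k T T T (d (x ⊗ₜ y) ⊗ₜ z))) := by
  have db (u) : d (b u) = u := LinearMap.congr_fun hdb u
  have bdL (u) : onLeft b (onLeft d u) = u := LinearMap.congr_fun (onLeft_mul_onLeft hbd) u
  have bdR (u) : onRight b (onRight d u) = u := LinearMap.congr_fun (onRight_mul_onRight hbd) u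
  let uL : (Module.End k (T ⊗[k] (T ⊗[k] T)))ˣ :=
    ⟨onLeft b, onLeft d, onLeft_mul_onLeft hbd, onLeft_mul_onLeft hdb⟩
  let uR : (Module.End k (T ⊗[k] (T ⊗[k] T)))ˣ :=
    ⟨onRight b, onRight d, onRight_mul_onRight hbd, onRight_mul_onRight hdb⟩
  have hu : uL * uR * uL = uR * uL * uR := Units.ext hyb
  refine jacobi_of_yangBaxter ?_ ?_ ?_ hbr x y z
  · refine LinearMap.ext fun u ↦ ?_
    have := congrArg d (LinearMap.congr_fun hl (onLeft d (onRight d u)))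
    simp only [LinearMap.comp_apply, Module.End.mul_apply, db, bdL, bdR] at this ⊢
    exact this.symm
  · refine LinearMap.ext fun u ↦ ?_
    have := congrArg d (LinearMap.congr_fun hr (onRight d (onLeft d u)))
    simp only [LinearMap.comp_apply, Module.End.mul_apply, db, bdL, bdR] at this ⊢
    exact this.symm
  · have := congrArg (fun v ↦ ((v⁻¹ : (Module.End k (T ⊗[k] (T ⊗[k] T)))ˣ) :
      Module.End k (T ⊗[k] (T ⊗[k] T)))) hu
    simpa [mul_inv_rev, mul_assoc, uL, uR] using this

end Braiding

end YetterDrinfeld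

/-- In the setting of a Yetter–Drinfeld module over a Hopf algebra `H` with
bijective antipode, with `[x,y] = xy − m∘c⁻¹(x⊗y)` and `c⁻¹(x⊗y) = Σ ˣy ⊗ xʸ`, the braided
Jacobi-type identity holds:
`[[x,y],z] − [x,[y,z]] = Σ [x, ʸz] yᶻ − Σ ˣy [xʸ, z]`. -/
theorem braided_jacobi_identity {V : Type*} [AddCommGroup V] [Module k V]
    (Sinv : H →ₗ[k] H)
    (hS1 : ∀ h, Sinv (HopfAlgebra.antipode (R := k) h) = h)
    (hS2 : ∀ h, HopfAlgebra.antipode (R := k) (Sinv h) = h)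
    (act : H ⊗[k] TensorAlgebra k V →ₗ[k] TensorAlgebra k V)
    (hact1 : ∀ x, act ((1 : H) ⊗ₜ x) = x)
    (hactm : ∀ (g h : H) (x : TensorAlgebra k V),
      act ((g * h) ⊗ₜ x) = act (g ⊗ₜ act (h ⊗ₜ x)))
    -- `act` is a module-algebra action:
    (hma : act ∘ₗ LinearMap.lTensor H (LinearMap.mul' k (TensorAlgebra k V)) =
      LinearMap.mul' k (TensorAlgebra k V) ∘ₗ TensorProduct.map act act
        ∘ₗ (TensorProduct.tensorTensorTensorComm k H H
            (TensorAlgebra k V) (TensorAlgebra k V)).toLinearMap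
        ∘ₗ LinearMap.rTensor (TensorAlgebra k V ⊗[k] TensorAlgebra k V)
            (Coalgebra.comul (R := k) (A := H)))
    (hmau : ∀ h : H, act (h ⊗ₜ 1) = (Coalgebra.counit (R := k) (A := H) h) • 1)
    -- `coact` is a comodule-algebra coaction:
    (coact : TensorAlgebra k V →ₐ[k] H ⊗[k] TensorAlgebra k V)
    (hcounit : ∀ x, (TensorProduct.lid k (TensorAlgebra k V))
      ((LinearMap.rTensor (TensorAlgebra k V) (Coalgebra.counit (R := k) (A := H)))
        (coact x)) = x)
    (hcoassoc : ∀ x, (TensorProduct.assoc k H H (TensorAlgebra k V))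
        ((LinearMap.rTensor (TensorAlgebra k V) (Coalgebra.comul (R := k) (A := H)))
          (coact x)) =
      (LinearMap.lTensor H coact.toLinearMap) (coact x))
    -- the Yetter–Drinfeld compatibility condition:
    (hYD : ydL (TensorAlgebra k V) act coact.toLinearMap =
      ydR (TensorAlgebra k V) act coact.toLinearMap)
    (x y z : TensorAlgebra k V) :
    brMap Sinv (TensorAlgebra k V) act coact.toLinearMap
        ((brMap Sinv (TensorAlgebra k V) act coact.toLinearMap (x ⊗ₜ y)) ⊗ₜ z) -
      brMap Sinv (TensorAlgebra k V) act coact.toLinearMap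
        (x ⊗ₜ (brMap Sinv (TensorAlgebra k V) act coact.toLinearMap (y ⊗ₜ z))) =
    LinearMap.mul' k (TensorAlgebra k V)
      ((LinearMap.rTensor (TensorAlgebra k V)
          (brMap Sinv (TensorAlgebra k V) act coact.toLinearMap))
        ((TensorProduct.assoc k (TensorAlgebra k V) (TensorAlgebra k V)
            (TensorAlgebra k V)).symm
          (x ⊗ₜ (cinvMap Sinv (TensorAlgebra k V) act coact.toLinearMap (y ⊗ₜ z))))) -
    LinearMap.mul' k (TensorAlgebra k V)
      ((LinearMap.lTensor (TensorAlgebra k V)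
          (brMap Sinv (TensorAlgebra k V) act coact.toLinearMap))
        ((TensorProduct.assoc k (TensorAlgebra k V) (TensorAlgebra k V) (TensorAlgebra k V))
          ((cinvMap Sinv (TensorAlgebra k V) act coact.toLinearMap (x ⊗ₜ y)) ⊗ₜ z))) := by
  have hcm : ∀ x y, coact.toLinearMap (x * y) = coact.toLinearMap x * coact.toLinearMap y :=
    map_mul coact
  have hdb := YetterDrinfeld.cinvMap_comp_braidMap hS1 hS2 hact1 hactm (coact := coact.toLinearMap)
    hcounit hcoassoc
  have hbd := YetterDrinfeld.braidMap_comp_cinvMap hS1 hS2 hact1 hactm (coact := coact.toLinearMap)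
    hcounit hcoassoc
  have hl := YetterDrinfeld.braidMap_comp_lTensor_mul hma (coact := coact.toLinearMap) hcoassoc
  have hr := YetterDrinfeld.braidMap_comp_rTensor_mul hactm hcm
  have hyb := YetterDrinfeld.braidMap_yangBaxter hactm (coact := coact.toLinearMap) hcoassoc hYD
  exact YetterDrinfeld.jacobi_of_inverse_braiding hdb hbd hl hr hyb rfl x y z
end
end

section
/- For any word u over A and any u-vector x, the difference x − [x] is a linear combination of w-bracket-words with w a monotonic super-word satisfying w > u (as words, lexicographically). -/
open TensorProduct

/-- A nonempty word `u` over a totally ordered alphabet is a Lyndon word if for every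
factorization `u = u₁ ++ u₂` into nonempty words one has `u < u₂` lexicographically. -/
def IsLyndon {α : Type*} [LinearOrder α] (u : List α) : Prop :=
  u ≠ [] ∧ ∀ u₁ u₂ : List α, u₁ ≠ [] → u₂ ≠ [] → u = u₁ ++ u₂ → u < u₂

/-- `ShirshovDecomp u v w` means `u = v ++ w` where `w` is the longest proper right factor of
`u` which is a Lyndon word (and `v` is nonempty). -/
def ShirshovDecomp {α : Type*} [LinearOrder α] (u v w : List α) : Prop :=
  u = v ++ w ∧ v ≠ [] ∧ w ≠ [] ∧ IsLyndon w ∧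
    ∀ w' : List α, w' <:+ u → w' ≠ u → IsLyndon w' → w'.length ≤ w.length

/-- For a word `u = a₁⋯aₘ` over the alphabet `ι`, the space of `u`-vectors
`V^u = V_{a₁}·V_{a₂}⋯V_{aₘ} ⊆ T` (the canonical image of `V_{a₁}⊗⋯⊗V_{aₘ}`). -/
def Vword {k T ι : Type*} [CommSemiring k] [Semiring T] [Algebra k T]
    (V : ι → Submodule k T) (u : List ι) : Submodule k T :=
  (u.map V).prod

section Bracket

variable {k T ι : Type*} [Field k] [Ring T] [Algebra k T] [LinearOrder ι]

/-- `IsBracketing V cinv Br` says that the family of linear maps `Br u` is the iterated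
bracketing `[·]` of `u`-vectors with respect to the inverse braiding `cinv`:
it is the identity on letters, it is given by the skew bracket
`[x,y] = xy − m∘c⁻¹(x⊗y)` of the two parts of the Shirshov decomposition on Lyndon words,
and it is multiplicative along the monotonic (Chen–Fox–Lyndon) factorization, whose first
factor is the longest Lyndon prefix. -/
def IsBracketing (V : ι → Submodule k T) (cinv : T ⊗[k] T →ₗ[k] T ⊗[k] T)
    (Br : List ι → T →ₗ[k] T) : Prop :=
  (∀ x ∈ (1 : Submodule k T), Br [] x = x) ∧
  (∀ a : ι, ∀ x ∈ V a, Br [a] x = x) ∧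
  (∀ u v w : List ι, IsLyndon u → ShirshovDecomp u v w →
    ∀ x ∈ Vword V v, ∀ y ∈ Vword V w,
      Br u (x * y) =
        (LinearMap.mul' k T - LinearMap.mul' k T ∘ₗ cinv) ((Br v x) ⊗ₜ (Br w y))) ∧
  (∀ u v w : List ι, u = v ++ w → IsLyndon v → w ≠ [] →
    (∀ v' : List ι, v' <+: u → IsLyndon v' → v'.length ≤ v.length) →
    ∀ x ∈ Vword V v, ∀ y ∈ Vword V w, Br u (x * y) = Br v x * Br w y)

/-- The key property of the inverse braiding on `TV` induced by the Yetter–Drinfeld structure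
of `V = ⊕ᵢ Vᵢ`: it maps `V^u ⊗ V^v` into `V^v ⊗ V^u`. -/
def BraidingCompat (V : ι → Submodule k T) (cinv : T ⊗[k] T →ₗ[k] T ⊗[k] T) : Prop :=
  ∀ u v : List ι, ∀ x,
    x ∈ LinearMap.range (TensorProduct.map (Vword V u).subtype (Vword V v).subtype) →
      cinv x ∈ LinearMap.range (TensorProduct.map (Vword V v).subtype (Vword V u).subtype)

end Bracket

section WordOrder

variable {ι : Type*} [LinearOrder ι]

theorem append_lt_append_of_lt_of_length_eq {v v' : List ι} (w w' : List ι) (h : v < v')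
    (hl : v.length = v'.length) : v ++ w < v' ++ w' := by
  induction v generalizing v' with
  | nil => cases v' <;> simp_all
  | cons a v ih =>
    cases v' with
    | nil => simp at hl
    | cons b v' =>
      simp only [List.cons_append, List.cons_lt_cons_iff] at h ⊢
      rcases h with h | ⟨h, h'⟩
      · exact Or.inl h
      · exact Or.inr ⟨h, ih h' (by simpa using hl)⟩

theorem append_lt_append_left_of_lt (v : List ι) {w w' : List ι} (h : w < w') :
    v ++ w < v ++ w' := by
  induction v with
  | nil => exact h
  | cons a v ih => exact List.cons_lt_cons_iff.2 (Or.inr ⟨rfl, ih⟩)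

theorem append_le_append_of_le_of_length_eq {v v' w w' : List ι} (hv : v ≤ v') (hw : w ≤ w')
    (hl : v.length = v'.length) : v ++ w ≤ v' ++ w' := by
  rcases hv.eq_or_lt with rfl | hv
  · rcases hw.eq_or_lt with rfl | hw
    · exact le_rfl
    · exact (append_lt_append_left_of_lt v hw).le
  · exact (append_lt_append_of_lt_of_length_eq w w' hv hl).le

theorem lt_append_of_lt {u w : List ι} (h : u < w) (v : List ι) : u < w ++ v := by
  induction u generalizing w with
  | nil => cases w <;> simp_all
  | cons a u ih =>
    cases w with
    | nil => simp at h
    | cons b w =>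
      simp only [List.cons_append, List.cons_lt_cons_iff] at h ⊢
      exact h.imp id fun h => ⟨h.1, ih h.2⟩

theorem isLyndon_singleton (a : ι) : IsLyndon [a] := by
  refine ⟨by simp, fun u₁ u₂ h₁ h₂ h => absurd (congrArg List.length h) ?_⟩
  have := List.length_pos_of_ne_nil h₁
  have := List.length_pos_of_ne_nil h₂
  simp only [List.length_append, List.length_singleton]
  omega

/-- Every nonempty word has a longest Lyndon prefix. -/
theorem exists_longest_isLyndon_prefix {u : List ι} (hu : u ≠ []) :
    ∃ v w : List ι, u = v ++ w ∧ IsLyndon v ∧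
      ∀ v' : List ι, v' <+: u → IsLyndon v' → v'.length ≤ v.length := by
  obtain ⟨v, ⟨⟨w, hw⟩, hv⟩, hmax⟩ :=
    Set.exists_max_image {v : List ι | v <+: u ∧ IsLyndon v} List.length
      ((List.finite_toSet u.inits).subset fun v hv => (List.mem_inits v u).2 hv.1)
      ⟨[u.head hu], ⟨u.tail, by simp⟩, isLyndon_singleton _⟩
  exact ⟨v, w, hw.symm, hv, fun v' h h' => hmax v' ⟨h, h'⟩⟩

/-- Every word of length at least two has a Shirshov decomposition. -/
theorem exists_shirshovDecomp {u : List ι} (hu : 2 ≤ u.length) :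
    ∃ v w : List ι, ShirshovDecomp u v w := by
  have hne : u ≠ [] := by rintro rfl; simp at hu
  obtain ⟨w, ⟨⟨v, hv⟩, hwu, hw⟩, hmax⟩ :=
    Set.exists_max_image {w : List ι | w <:+ u ∧ w ≠ u ∧ IsLyndon w} List.length
      ((List.finite_toSet u.tails).subset fun w hw => (List.mem_tails w u).2 hw.1)
      ⟨[u.getLast hne], ⟨u.dropLast, List.dropLast_append_getLast hne⟩,
        fun h => by rw [← h] at hu; simp at hu, isLyndon_singleton _⟩
  refine ⟨v, w, hv.symm, ?_, hw.1, hw, fun w' h₁ h₂ h₃ => hmax w' ⟨h₁, h₂, h₃⟩⟩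
  rintro rfl
  exact hwu (by simpa using hv)

end WordOrder

section WordSpan

variable {k T ι : Type*} [Field k] [Ring T] [Algebra k T]

theorem Vword_append (V : ι → Submodule k T) (v w : List ι) :
    Vword V (v ++ w) = Vword V v * Vword V w := by
  simp [Vword]

/-- The sum of the spaces of `w`-vectors for `w` in a set of words. -/
def wordSpan (V : ι → Submodule k T) (S : Set (List ι)) : Submodule k T :=
  ⨆ w ∈ S, Vword V w

theorem Vword_le_wordSpan (V : ι → Submodule k T) {S : Set (List ι)} {w : List ι} (hw : w ∈ S) :
    Vword V w ≤ wordSpan V S :=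
  le_biSup (Vword V) hw

theorem wordSpan_mono (V : ι → Submodule k T) {S S' : Set (List ι)} (h : S ⊆ S') :
    wordSpan V S ≤ wordSpan V S' :=
  biSup_mono h

theorem wordSpan_induction {V : ι → Submodule k T} {S : Set (List ι)} {x : T}
    (hx : x ∈ wordSpan V S) (N : Submodule k T) (h : ∀ w ∈ S, ∀ y ∈ Vword V w, y ∈ N) : x ∈ N :=
  (iSup₂_le h : wordSpan V S ≤ N) hx

theorem mul_mem_wordSpan {V : ι → Submodule k T} {S S' S'' : Set (List ι)}
    (h : ∀ a ∈ S, ∀ b ∈ S', a ++ b ∈ S'') {x y : T} (hx : x ∈ wordSpan V S)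
    (hy : y ∈ wordSpan V S') : x * y ∈ wordSpan V S'' := by
  refine wordSpan_induction hx ((wordSpan V S'').comap (LinearMap.mulRight k y))
    fun a ha x hx => ?_
  refine wordSpan_induction hy ((wordSpan V S'').comap (LinearMap.mulLeft k x))
    fun b hb y hy => ?_
  exact Vword_le_wordSpan V (h a ha b hb) (Vword_append V a b ▸ Submodule.mul_mem_mul hx hy)

theorem mul'_mem_mul_of_mem_range_map (M N : Submodule k T) {t : T ⊗[k] T}
    (ht : t ∈ LinearMap.range (TensorProduct.map M.subtype N.subtype)) :
    LinearMap.mul' k T t ∈ M * N := by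
  obtain ⟨s, rfl⟩ := ht
  induction s with
  | zero => simp
  | tmul x y => simpa using Submodule.mul_mem_mul x.2 y.2
  | add s₁ s₂ h₁ h₂ => simpa only [map_add] using add_mem h₁ h₂

theorem mul'_cinv_mem_wordSpan [LinearOrder ι] {V : ι → Submodule k T}
    {cinv : T ⊗[k] T →ₗ[k] T ⊗[k] T} (hc : BraidingCompat V cinv) {S S' S'' : Set (List ι)}
    (h : ∀ a ∈ S, ∀ b ∈ S', b ++ a ∈ S'') {x y : T} (hx : x ∈ wordSpan V S)
    (hy : y ∈ wordSpan V S') : LinearMap.mul' k T (cinv (x ⊗ₜ y)) ∈ wordSpan V S'' := by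
  refine wordSpan_induction hx ((wordSpan V S'').comap
    (LinearMap.mul' k T ∘ₗ cinv ∘ₗ (TensorProduct.mk k T T).flip y)) fun a ha x hx => ?_
  refine wordSpan_induction hy ((wordSpan V S'').comap
    (LinearMap.mul' k T ∘ₗ cinv ∘ₗ TensorProduct.mk k T T x)) fun b hb y hy => ?_
  refine Vword_le_wordSpan V (h a ha b hb) (Vword_append V b a ▸ ?_)
  exact mul'_mem_mul_of_mem_range_map _ _ (hc a b _ ⟨⟨x, hx⟩ ⊗ₜ ⟨y, hy⟩, by simp⟩)

end WordSpan

section Bracket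

variable {k T ι : Type*} [Field k] [Ring T] [Algebra k T] [LinearOrder ι]
  {V : ι → Submodule k T}

theorem mem_wordSpan_ge_of_sub_mem {u : List ι} {x y : T} (hx : x ∈ Vword V u)
    (h : x - y ∈ wordSpan V {w | u < w ∧ w.Perm u}) :
    y ∈ wordSpan V {w | u ≤ w ∧ w.Perm u} := by
  have h' := wordSpan_mono V (fun w hw => ⟨hw.1.le, hw.2⟩ :
    {w | u < w ∧ w.Perm u} ⊆ {w | u ≤ w ∧ w.Perm u}) h
  have hu : u ∈ {w | u ≤ w ∧ w.Perm u} := ⟨le_rfl, .refl u⟩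
  simpa using sub_mem (Vword_le_wordSpan V hu hx) h'

theorem mul_sub_mul_mem_wordSpan_gt {v w : List ι} {x x' y y' : T}
    (hx : x ∈ Vword V v) (hy : y ∈ Vword V w)
    (hx' : x - x' ∈ wordSpan V {z | v < z ∧ z.Perm v})
    (hy' : y - y' ∈ wordSpan V {z | w < z ∧ z.Perm w}) :
    x * y - x' * y' ∈ wordSpan V {z | v ++ w < z ∧ z.Perm (v ++ w)} := by
  have hw : w ∈ ({w} : Set (List ι)) := rfl
  have h₁ : (x - x') * y ∈ wordSpan V {z | v ++ w < z ∧ z.Perm (v ++ w)} := by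
    refine mul_mem_wordSpan ?_ hx' (Vword_le_wordSpan V hw hy)
    rintro a ⟨ha, hav⟩ b rfl
    exact ⟨append_lt_append_of_lt_of_length_eq _ _ ha hav.length_eq.symm, hav.append_right _⟩
  have h₂ : x' * (y - y') ∈ wordSpan V {z | v ++ w < z ∧ z.Perm (v ++ w)} := by
    refine mul_mem_wordSpan ?_ (mem_wordSpan_ge_of_sub_mem hx hx') hy'
    rintro a ⟨ha, hav⟩ b ⟨hb, hbw⟩
    exact ⟨(append_lt_append_left_of_lt v hb).trans_le
      (append_le_append_of_le_of_length_eq ha le_rfl hav.length_eq.symm), hav.append hbw⟩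
  have := add_mem h₁ h₂
  rwa [sub_mul, mul_sub, sub_add_sub_cancel] at this

/-- The bracket of a `u`-vector is unitriangular with respect to the lexicographic order. -/
theorem sub_bracket_mem_wordSpan_gt {cinv : T ⊗[k] T →ₗ[k] T ⊗[k] T}
    (hc : BraidingCompat V cinv) {Br : List ι → T →ₗ[k] T} (hBr : IsBracketing V cinv Br)
    (u : List ι) {x : T} (hx : x ∈ Vword V u) :
    x - Br u x ∈ wordSpan V {w | u < w ∧ w.Perm u} := by
  obtain ⟨hnil, hletter, hlyndon, hmono⟩ := id hBr
  induction hn : u.length using Nat.strong_induction_on generalizing u x with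
  | _ n ih =>
  subst hn
  by_cases hu₀ : u = []
  · subst hu₀
    rw [hnil x (by simpa [Vword] using hx), sub_self]
    exact zero_mem _
  suffices H : ∃ v w : List ι, u = v ++ w ∧ ∀ x ∈ Vword V v, ∀ y ∈ Vword V w,
      x * y - Br u (x * y) ∈ wordSpan V {w | u < w ∧ w.Perm u} by
    obtain ⟨v, w, huvw, H⟩ := H
    have hle : Vword V v * Vword V w ≤
        (wordSpan V {w | u < w ∧ w.Perm u}).comap (LinearMap.id - Br u) :=
      Submodule.mul_le.2 H
    exact hle (by rwa [← Vword_append, ← huvw])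
  by_cases hu : IsLyndon u
  · by_cases hu₁ : u.length = 1
    · obtain ⟨a, rfl⟩ := List.length_eq_one_iff.1 hu₁
      refine ⟨[a], [], rfl, fun x hx y hy => ?_⟩
      have hxy : x * y ∈ Vword V [a] := by
        rw [← List.append_nil [a], Vword_append]
        exact Submodule.mul_mem_mul hx hy
      rw [hletter a _ (by simpa [Vword] using hxy), sub_self]
      exact zero_mem _
    · have hpos := List.length_pos_of_ne_nil hu₀
      obtain ⟨v, w, hvw⟩ := exists_shirshovDecomp (u := u) (by omega)
      obtain ⟨huvw, hv₀, hw₀, hw, -⟩ := id hvw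
      have hvpos := List.length_pos_of_ne_nil hv₀
      have hwpos := List.length_pos_of_ne_nil hw₀
      have hlen : u.length = v.length + w.length := by rw [huvw, List.length_append]
      have huw : u < w := hu.2 v w hv₀ hw₀ huvw
      refine ⟨v, w, huvw, fun x hx y hy => ?_⟩
      have hx' := ih v.length (by omega) v hx rfl
      have hy' := ih w.length (by omega) w hy rfl
      have hprod := mul_sub_mul_mem_wordSpan_gt hx hy hx' hy'
      rw [← huvw] at hprod
      have hbraid : LinearMap.mul' k T (cinv (Br v x ⊗ₜ Br w y)) ∈
          wordSpan V {w | u < w ∧ w.Perm u} := by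
        refine mul'_cinv_mem_wordSpan hc ?_ (mem_wordSpan_ge_of_sub_mem hx hx')
          (mem_wordSpan_ge_of_sub_mem hy hy')
        rintro a ⟨-, hav⟩ b ⟨hb, hbw⟩
        exact ⟨lt_append_of_lt (huw.trans_le hb) a,
          huvw ▸ (hbw.append hav).trans List.perm_append_comm⟩
      rw [hlyndon u v w hu hvw x hx y hy]
      simpa [sub_sub_eq_add_sub, add_sub_right_comm] using add_mem hprod hbraid
  · obtain ⟨v, w, huvw, hv, hmax⟩ := exists_longest_isLyndon_prefix hu₀
    have hw₀ : w ≠ [] := by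
      rintro rfl
      exact hu (by simpa [huvw] using hv)
    have hvpos := List.length_pos_of_ne_nil hv.1
    have hwpos := List.length_pos_of_ne_nil hw₀
    have hlen : u.length = v.length + w.length := by rw [huvw, List.length_append]
    refine ⟨v, w, huvw, fun x hx y hy => ?_⟩
    have hprod := mul_sub_mul_mem_wordSpan_gt hx hy (ih v.length (by omega) v hx rfl)
      (ih w.length (by omega) w hy rfl)
    rw [← huvw] at hprod
    rwa [hmono u v w huvw hv hw₀ hmax x hx y hy]

/-- Every `u`-vector is a sum of bracket words of rearrangements of `u` that are at least `u`. -/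
theorem Vword_le_iSup_map_bracket {cinv : T ⊗[k] T →ₗ[k] T ⊗[k] T}
    (hc : BraidingCompat V cinv) {Br : List ι → T →ₗ[k] T} (hBr : IsBracketing V cinv Br)
    (u : List ι) :
    Vword V u ≤ ⨆ w ∈ {w : List ι | u ≤ w ∧ w.Perm u}, (Vword V w).map (Br w) := by
  have hfin : {w : List ι | w.Perm u}.Finite :=
    (List.finite_toSet u.permutations).subset fun w hw => List.mem_permutations.2 hw
  suffices H : ∀ v ∈ {w : List ι | w.Perm u},
      Vword V v ≤ ⨆ w ∈ {w : List ι | v ≤ w ∧ w.Perm u}, (Vword V w).map (Br w) from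
    H u (List.Perm.refl u)
  intro v hv
  refine (hfin.wellFoundedOn (r := (· > ·))).induction (P := fun v =>
    Vword V v ≤ ⨆ w ∈ {w : List ι | v ≤ w ∧ w.Perm u}, (Vword V w).map (Br w)) hv
    fun v hv ih x hx => ?_
  have hvv : v ∈ {w : List ι | v ≤ w ∧ w.Perm u} := ⟨le_rfl, hv⟩
  rw [← sub_add_cancel x (Br v x)]
  refine add_mem (wordSpan_induction (sub_bracket_mem_wordSpan_gt hc hBr v hx) _ ?_)
    (le_biSup (fun w => (Vword V w).map (Br w)) hvv (Submodule.mem_map_of_mem hx))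
  rintro w ⟨hvw, hwv⟩ y hy
  refine (biSup_mono (f := fun w => (Vword V w).map (Br w)) ?_) (ih w (hwv.trans hv) hvw hy)
  exact fun z hz => ⟨hvw.le.trans hz.1, hz.2⟩

end Bracket

/-- For any word `u` and any `u`-vector `x`, the difference `x − [x]` is a
linear combination of `w`-bracket-words with `w` a monotonic super-word (identified with the
word `w` via the Chen–Fox–Lyndon factorization) satisfying `w > u` lexicographically. -/
theorem sub_bracket_mem_higher {k T ι : Type*} [Field k] [Ring T] [Algebra k T]
    [LinearOrder ι]
    (V : ι → Submodule k T) (cinv : T ⊗[k] T →ₗ[k] T ⊗[k] T)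
    (hc : BraidingCompat V cinv)
    (Br : List ι → T →ₗ[k] T) (hBr : IsBracketing V cinv Br)
    (u : List ι) (x : T) (hx : x ∈ Vword V u) :
    x - Br u x ∈
      ⨆ w ∈ {w : List ι | u < w ∧ w.length = u.length}, (Vword V w).map (Br w) := by
  refine wordSpan_induction (sub_bracket_mem_wordSpan_gt hc hBr u hx) _ ?_
  rintro w ⟨huw, hwu⟩ y hy
  refine (biSup_mono (f := fun w => (Vword V w).map (Br w)) ?_)
    (Vword_le_iSup_map_bracket hc hBr w hy)
  exact fun z hz => ⟨huw.trans_le hz.1, (hz.2.trans hwu).length_eq⟩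
end
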